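/- Let Q be a finite nonassociative commutative Moufang loop whose order is a power of 3, such that Z(Q) is cyclic (there is z ∈ Z(Q) such that every element of Z(Q) is a finite iterated sum z+z+...+z) and every associator of Q lies in Z(Q) (for all x,y,z ∈ Q there exists w ∈ Z(Q) with (x+y)+z = w + (x+(y+z))), so that Q/Z(Q) is associative. Then any two automorphisms φ, ψ of Q satisfying x+φ(x) ∈ Z(Q) and x+ψ(x) ∈ Z(Q) for all x (i.e., any two J-central automorphisms) commute: φ∘ψ = ψ∘φ. -/

import Mathlib

/-- A loop: a quasigroup with a two-sided neutral element. -/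
structure Loop (Q : Type) where
  add : Q → Q → Q
  zero : Q
  addLeftBij : ∀ x, Function.Bijective fun y => add x y
  addRightBij : ∀ x, Function.Bijective fun y => add y x
  zero_add : ∀ x, add zero x = x
  add_zero : ∀ x, add x zero = x

namespace Loop

/-- The center of a loop: elements commuting and associating with everything. -/
def center {Q : Type} (L : Loop Q) : Set Q :=
  {z | (∀ x, L.add z x = L.add x z) ∧
       (∀ x y, L.add z (L.add x y) = L.add (L.add z x) y) ∧
       (∀ x y, L.add x (L.add z y) = L.add (L.add x z) y) ∧
       (∀ x y, L.add x (L.add y z) = L.add (L.add x y) z)}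

/-- A map `α` is central if `Z(Q) + α(x) = Z(Q) + x` for every `x`. -/
def IsCentral {Q : Type} (L : Loop Q) (α : Q → Q) : Prop :=
  ∀ x, (fun z => L.add z (α x)) '' L.center = (fun z => L.add z x) '' L.center

/-- Automorphism of a loop: a bijective map respecting the operation. -/
def IsAut {Q : Type} (L : Loop Q) (f : Q → Q) : Prop :=
  Function.Bijective f ∧ ∀ x y, f (L.add x y) = L.add (f x) (f y)

/-- `neg` provides two-sided inverses for the loop. -/
def IsTwoSidedInv {Q : Type} (L : Loop Q) (neg : Q → Q) : Prop :=
  ∀ x, L.add x (neg x) = L.zero ∧ L.add (neg x) x = L.zero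

/-- Commutative Moufang loop: commutative and satisfying the Moufang identity. -/
def IsCommMoufang {Q : Type} (L : Loop Q) : Prop :=
  (∀ x y, L.add x y = L.add y x) ∧
  (∀ x y z, L.add x (L.add y (L.add x z)) = L.add (L.add (L.add x y) x) z)

end Loop

namespace Loop

/-- `nsmul L n x` is the iterated sum `x + (x + (... + x))` with `n` terms. -/
def nsmul {Q : Type} (L : Loop Q) : ℕ → Q → Q
  | 0, _ => L.zero
  | n + 1, x => L.add x (nsmul L n x)

end Loop

namespace Loop
variable {Q : Type} {L : Loop Q}

theorem exists_neg (L : Loop Q) : ∃ n : Q → Q, ∀ x, L.add x (n x) = L.zero := by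
  choose n hn using fun x => (L.addLeftBij x).2 L.zero
  exact ⟨n, hn⟩

theorem lcancel {x y z : Q} (e : L.add x y = L.add x z) : y = z := (L.addLeftBij x).1 e

theorem alt (h : L.IsCommMoufang) (x z : Q) :
    L.add x (L.add x z) = L.add (L.add x x) z := by
  have := h.2 x L.zero z
  rwa [L.zero_add, L.add_zero] at this

theorem mfA (h : L.IsCommMoufang) (x y z : Q) :
    L.add x (L.add y (L.add x z)) = L.add (L.add x (L.add x y)) z := by
  rw [h.2, h.1 (L.add x y) x]

theorem lip (h : L.IsCommMoufang) {x x' : Q} (e : L.add x x' = L.zero) (y : Q) :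
    L.add x' (L.add x y) = y := by
  apply lcancel (L := L) (x := x)
  rw [mfA h, e, L.add_zero]

theorem lip' (h : L.IsCommMoufang) {x x' : Q} (e : L.add x x' = L.zero) (y : Q) :
    L.add x (L.add x' y) = y := by
  rw [h.1] at e
  exact lip h e y

theorem tA (h : L.IsCommMoufang) {x x' : Q} (e : L.add x x' = L.zero) (y z : Q) :
    L.add (L.add x (L.add x y)) (L.add x' z) = L.add x (L.add y z) := by
  rw [← mfA h, lip' h e]

theorem tB (h : L.IsCommMoufang) {x x' : Q} (e : L.add x x' = L.zero) (y z : Q) :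
    L.add (L.add x' y) (L.add x (L.add x z)) = L.add x (L.add y z) := by
  rw [h.1, tA h e, h.1 y z]

theorem tM (h : L.IsCommMoufang) (x y z : Q) :
    L.add x (L.add x (L.add y z)) = L.add (L.add x y) (L.add x z) := by
  obtain ⟨n, hn⟩ := L.exists_neg
  have e := hn x
  rw [← tB h e y z, ← tA h e, lip' h e, lip h e]

theorem mem_center (h : L.IsCommMoufang) {c : Q}
    (hc : ∀ x y, L.add c (L.add x y) = L.add (L.add c x) y) : c ∈ L.center := by
  refine ⟨fun x => h.1 _ _, hc, fun x y => ?_, fun x y => ?_⟩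
  · rw [h.1 x (L.add c y), ← hc, h.1 y x, hc, h.1 c x]
  · rw [h.1 y c, h.1 x, ← hc, h.1 y x, h.1 c]

theorem three_mem (h : L.IsCommMoufang) (x : Q) : L.add x (L.add x x) ∈ L.center := by
  obtain ⟨n, hn⟩ := L.exists_neg
  have e := hn x
  have key : ∀ y z, L.add x (L.add x (L.add x (L.add y z))) =
      L.add (L.add x (L.add x (L.add x y))) z := by
    intro y z
    rw [← tA h e y z, tM h, lip' h e]
  have k0 : ∀ z, L.add x (L.add x (L.add x z)) = L.add (L.add x (L.add x x)) z := by
    intro z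
    have := key L.zero z
    rwa [L.zero_add, L.add_zero] at this
  apply mem_center h
  intro y z
  rw [← k0, key, k0]

theorem neg_add' (h : L.IsCommMoufang) {n : Q → Q} (hn : ∀ x, L.add x (n x) = L.zero) (x y : Q) :
    n (L.add x y) = L.add (n x) (n y) := by
  have h1 : L.add (n x) (L.add x y) = y := lip h (hn x) y
  have h2 : L.add (n (L.add x y)) y = n x := by
    have := lip h (hn (L.add x y)) (n x)
    rwa [h.1 _ (n x), h1] at this
  have h3 := lip h (hn y) (n (L.add x y))
  rw [h.1 y, h2, h.1] at h3
  exact h3.symm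

theorem zero_mem (h : L.IsCommMoufang) : L.zero ∈ L.center :=
  mem_center h fun x y => by rw [L.zero_add, L.zero_add]

theorem add_mem (h : L.IsCommMoufang) {c d : Q} (hc : c ∈ L.center) (hd : d ∈ L.center) :
    L.add c d ∈ L.center := mem_center h fun x y => by
  rw [← hc.2.1, hd.2.1, hc.2.1, hc.2.1]

theorem neg_mem (h : L.IsCommMoufang) {c d : Q} (hc : c ∈ L.center)
    (e : L.add c d = L.zero) : d ∈ L.center := mem_center h fun x y => by
  apply lcancel (L := L) (x := c)
  rw [lip' h e, hc.2.1, lip' h e]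

theorem add_add_center (h : L.IsCommMoufang) {p q : Q} (hp : p ∈ L.center) (hq : q ∈ L.center)
    (u v : Q) : L.add (L.add u p) (L.add v q) = L.add (L.add u v) (L.add p q) := by
  rw [hq.2.2.2 (L.add u p) v, ← hp.2.2.1, h.1 p v, hp.2.2.2, ← hq.2.2.2]

theorem exists_grp (h : L.IsCommMoufang) :
    ∃ I : AddCommGroup L.center, ∀ a b : L.center, (I.add a b : Q) = L.add a b := by
  obtain ⟨n, hn⟩ := L.exists_neg
  letI : Add L.center := ⟨fun a b => ⟨L.add a b, add_mem h a.2 b.2⟩⟩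
  letI : Zero L.center := ⟨⟨L.zero, zero_mem h⟩⟩
  letI : Neg L.center := ⟨fun a => ⟨n a, neg_mem h a.2 (hn a)⟩⟩
  letI G : AddGroup L.center := AddGroup.ofLeftAxioms
    (fun a b c => Subtype.ext (a.2.2.1 b c).symm)
    (fun a => Subtype.ext (L.zero_add a))
    (fun a => Subtype.ext ((h.1 _ _).trans (hn a)))
  exact ⟨{ G with add_comm := fun a b => Subtype.ext (h.1 _ _) }, fun a b => rfl⟩

end Loop

open Loop in
/-- In a finite nonassociative commutative Moufang 3-loop with cyclic center
and central associators, any two J-central automorphisms commute. -/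
theorem stmt {Q : Type} [Finite Q] (L : Loop Q) (h : L.IsCommMoufang)
    (hnonassoc : ∃ x y z, L.add (L.add x y) z ≠ L.add x (L.add y z))
    (hcard : ∃ n : ℕ, Nat.card Q = 3 ^ n)
    (hcyc : ∃ z ∈ L.center, ∀ w ∈ L.center, ∃ n : ℕ, w = nsmul L (n + 1) z)
    (hassocZ : ∀ x y z, ∃ w ∈ L.center,
      L.add (L.add x y) z = L.add w (L.add x (L.add y z)))
    (φ ψ : Q → Q) (hφ : L.IsAut φ) (hψ : L.IsAut ψ)
    (hφc : ∀ x, L.add x (φ x) ∈ L.center)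
    (hψc : ∀ x, L.add x (ψ x) ∈ L.center) :
    φ ∘ ψ = ψ ∘ φ := by
  obtain ⟨I, hI⟩ := exists_grp h
  have cadd : ∀ a b : L.center, ((a + b : L.center) : Q) = L.add a b := hI
  have czero : ((0 : L.center) : Q) = L.zero := by
    have h1 := cadd 0 0
    rw [_root_.add_zero] at h1
    apply lcancel (L := L) (x := ((0 : L.center) : Q))
    exact h1.symm.trans (L.add_zero _).symm
  obtain ⟨n, hn⟩ := L.exists_neg
  have hnn : ∀ x, n (n x) = x := fun x => by
    have := lip' h (hn x) (n (n x))
    rw [hn, L.add_zero] at this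
    exact this.symm
  have cneg : ∀ a : L.center, ((-a : L.center) : Q) = n a := fun a => by
    apply lcancel (L := L) (x := (a : Q))
    rw [← cadd, add_neg_cancel, czero, hn]
  -- cyclicity
  obtain ⟨z0, hz0, hgen⟩ := hcyc
  set z : L.center := ⟨z0, hz0⟩ with hz
  have cns : ∀ k : ℕ, ((k • z : L.center) : Q) = nsmul L k z0 := by
    intro k
    induction k with
    | zero => rw [zero_smul, czero]; rfl
    | succ k ih => rw [succ_nsmul', cadd, ih]; rfl
  have gen : ∀ g : L.center, ∃ k : ℕ, g = k • z := by
    intro g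
    obtain ⟨k, hk⟩ := hgen g g.2
    exact ⟨k + 1, Subtype.ext (by rw [cns, hk])⟩
  -- exponent
  have hexp : ∃ N : ℕ, ∀ g : L.center, 3 ^ N • g = 0 := by
    obtain ⟨N, hN⟩ := hcard
    letI act : AddAction L.center Q :=
      { vadd := fun g x => L.add g x
        zero_vadd := fun x => by
          change L.add ((0 : L.center) : Q) x = x
          rw [czero, L.zero_add]
        add_vadd := fun a b x => by
          change L.add ((a + b : L.center) : Q) x = L.add a (L.add b x)
          rw [cadd, a.2.2.1] }
    have hstab : ∀ x : Q, AddAction.stabilizer L.center x = ⊥ := by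
      intro x
      rw [eq_bot_iff]
      intro g hg
      have hg' : L.add g x = x := hg
      rw [AddSubgroup.mem_bot]
      apply Subtype.ext
      rw [czero]
      apply (L.addRightBij x).1
      change L.add g x = L.add L.zero x
      rw [hg', L.zero_add]
    have hdvd : Nat.card L.center ∣ Nat.card Q := by
      have e := AddAction.selfEquivOrbitsQuotientProd (G := L.center) (X := Q) hstab
      rw [Nat.card_congr e, Nat.card_prod]
      exact dvd_mul_left _ _
    refine ⟨N, fun g => ?_⟩
    rw [← addOrderOf_dvd_iff_nsmul_eq_zero, ← hN]
    exact (addOrderOf_dvd_natCard g).trans hdvd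
  obtain ⟨N, hN⟩ := hexp
  -- main facts for a J-central automorphism
  have main : ∀ f : Q → Q, L.IsAut f → (∀ x, L.add x (f x) ∈ L.center) →
      ∃ a : Q → L.center, ∃ α : ℕ, (∀ x, f x = L.add (n x) (a x)) ∧
        (∀ x y, a (L.add x y) = a x + a y) ∧
        (∀ g : L.center, a g = (3 * α) • g) := by
    intro f hf hfc
    let a : Q → L.center := fun x => ⟨L.add x (f x), hfc x⟩
    have h1 : ∀ x, f x = L.add (n x) (a x) := fun x => (lip h (hn x) (f x)).symm
    have h2 : ∀ x y, a (L.add x y) = a x + a y := by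
      intro x y
      apply Subtype.ext
      apply lcancel (L := L) (x := n (L.add x y))
      rw [← h1, hf.2, cadd, neg_add' h hn, h1 x, h1 y]
      exact add_add_center h (a x).2 (a y).2 _ _
    have h20 : a L.zero = 0 := by
      have := h2 L.zero L.zero
      rw [L.zero_add] at this
      exact left_eq_add.mp this
    let A : L.center →+ L.center :=
      { toFun := fun g => a g
        map_zero' := by rw [czero, h20]
        map_add' := fun g k => by rw [cadd, h2] }
    obtain ⟨α, hα⟩ := gen (A z)
    have hA : ∀ g : L.center, a g = α • g := by
      intro g
      obtain ⟨k, rfl⟩ := gen g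
      change A (k • z) = _
      rw [map_nsmul, hα, smul_comm]
    have h3 : 3 ∣ α := by
      by_contra hnd
      obtain ⟨x, y, u, hxyu⟩ := hnonassoc
      obtain ⟨w, hw, he⟩ := hassocZ x y u
      have hw0 : α • (⟨w, hw⟩ : L.center) = 0 := by
        rw [← hA]
        have := congrArg a he
        simp only [h2] at this
        rw [← add_assoc (a x)] at this
        exact right_eq_add.mp this
      have hc : Nat.gcd α (3 ^ N) = 1 :=
        Nat.Coprime.pow_right _ ((Nat.coprime_comm.mp ((Nat.Prime.coprime_iff_not_dvd Nat.prime_three).2 hnd)))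
      have d1 := addOrderOf_dvd_iff_nsmul_eq_zero.2 hw0
      have d2 := addOrderOf_dvd_iff_nsmul_eq_zero.2 (hN ⟨w, hw⟩)
      have d3 := Nat.dvd_gcd d1 d2
      rw [hc, Nat.dvd_one, AddMonoid.addOrderOf_eq_one_iff] at d3
      have d4 : w = L.zero := by rw [← czero, ← d3]
      rw [d4, L.zero_add] at he
      exact hxyu he
    obtain ⟨α', rfl⟩ := h3
    exact ⟨a, α', h1, h2, hA⟩
  obtain ⟨a, α, a1, a2, a3⟩ := main φ hφ hφc
  obtain ⟨b, β, b1, b2, b3⟩ := main ψ hψ hψc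
  have comp : ∀ (f g : Q → Q) (a b : Q → L.center), (∀ x, f x = L.add (n x) (a x)) →
      (∀ x, g x = L.add (n x) (b x)) → (∀ x y, a (L.add x y) = a x + a y) →
      ∀ x, f (g x) = L.add x ((-b x + (-a x + a (b x)) : L.center) : Q) := by
    intro f g a b a1 b1 a2 x
    have h20 : a L.zero = 0 := by
      have := a2 L.zero L.zero
      rw [L.zero_add] at this
      exact left_eq_add.mp this
    have han : a (n x) = - a x := by
      have := a2 x (n x)
      rw [hn, h20] at this
      exact (neg_eq_of_add_eq_zero_right this.symm).symm
    rw [a1, b1, a2, han, neg_add' h hn, hnn, ← cneg, cadd (-b x),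
      ((-a x + a (b x) : L.center)).2.2.2.2]
  have key : ∀ (a b : Q → L.center) (α β : ℕ), (∀ x y, b (L.add x y) = b x + b y) →
      (∀ g : L.center, a g = (3 * α) • g) → (∀ g : L.center, b g = (3 * β) • g) →
      ∀ x, a (b x) = (3 * α * β) • (⟨_, three_mem h x⟩ : L.center) := by
    intro a b α β b2 a3 b3 x
    have e : b (L.add x (L.add x x)) = 3 • b x := by
      rw [b2, b2]; abel
    have e2 := b3 ⟨_, three_mem h x⟩
    simp only at e2
    rw [e] at e2
    rw [a3, mul_comm 3 α, mul_smul, e2, ← mul_smul]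
    congr 1; ring
  funext x
  simp only [Function.comp]
  rw [comp φ ψ a b a1 b1 a2, comp ψ φ b a b1 a1 b2, key a b α β b2 a3 b3, key b a β α a2 b3 a3]
  congr 2
  rw [mul_right_comm 3 β α]
  abel
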